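/- The cubic Veronese surface V_{2,3} ⊆ ℙ⁹ is (1,4)-defective with defect 1: the variety of lines of ℙ⁹ lying in the span of 5 points of V_{2,3} has dimension strictly less than its expected dimension min{5·2 + 2·3, 2·8} = 16; equivalently, two general plane cubics cannot be simultaneously written as linear combinations of the same 5 cubes of linear forms. -/

import Mathlib

noncomputable section

/-- Projective space over ℂ with homogeneous coordinates indexed by `ι`. -/
abbrev Pj (ι : Type) := Projectivization ℂ (ι → ℂ)

/-- A polynomial `f` vanishes at a point of projective space if it vanishes at
every vector representative of the point. -/
def pvanishes {ι : Type} (f : MvPolynomial ι ℂ) (x : Pj ι) : Prop :=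
  ∀ (w : ι → ℂ) (hw : w ≠ 0), Projectivization.mk ℂ w hw = x → MvPolynomial.eval w f = 0

/-- The Zariski topology on projective space: generated by the complements of
zero sets of polynomials. -/
instance pjTop (ι : Type) : TopologicalSpace (Pj ι) :=
  TopologicalSpace.generateFrom {U | ∃ f : MvPolynomial ι ℂ, U = {x | ¬ pvanishes f x}}

/-- Dimension of a subset of projective space: the topological Krull dimension
in the (subspace) Zariski topology. -/
def pdim {ι : Type} (S : Set (Pj ι)) : WithBot ℕ∞ := topologicalKrullDim S

/-- A subset of projective space is nondegenerate if its points span the whole space. -/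
def Nondeg {ι : Type} (V : Set (Pj ι)) : Prop :=
  ⨆ x ∈ V, Projectivization.submodule x = ⊤

/-- The h-secant variety `Sec_h(V)`: the Zariski closure of the set of points lying
in the span of h+1 independent points of V. -/
def secant {ι : Type} (h : ℕ) (V : Set (Pj ι)) : Set (Pj ι) :=
  closure {x | ∃ p : Fin (h + 1) → Pj ι, (∀ j, p j ∈ V) ∧
    LinearIndependent ℂ (fun j => (p j).rep) ∧
    Projectivization.submodule x ≤ Submodule.span ℂ (Set.range fun j => (p j).rep)}


/-- The Grassmannian of k-planes of the projective space ℙ(ℂ^ι), i.e. of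
(k+1)-dimensional linear subspaces of ℂ^ι. -/
def Gr (ι : Type) (k : ℕ) := {W : Submodule ℂ (ι → ℂ) // Module.finrank ℂ W = k + 1}

/-- The Zariski topology on affine space ℂ^ι. -/
def affTop (ι : Type) : TopologicalSpace (ι → ℂ) :=
  TopologicalSpace.generateFrom {U | ∃ f : MvPolynomial ι ℂ, U = {x | MvPolynomial.eval x f ≠ 0}}

/-- The Stiefel-type parameter space of (k+1) linearly independent vectors in ℂ^ι,
recorded as a single matrix-like function. -/
def Stiefel (ι : Type) (k : ℕ) : Type :=
  {g : Fin (k + 1) × ι → ℂ // LinearIndependent ℂ (fun i => fun j => g (i, j))}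

def stiefelTop (ι : Type) (k : ℕ) : TopologicalSpace (Stiefel ι k) :=
  TopologicalSpace.induced Subtype.val (affTop _)

def stiefelToGr (ι : Type) (k : ℕ) (g : Stiefel ι k) : Gr ι k :=
  ⟨Submodule.span ℂ (Set.range fun i => fun j => g.1 (i, j)), by
    rw [finrank_span_eq_card g.2]; simp⟩

/-- The Zariski topology on the Grassmannian: the quotient topology from the
Stiefel parametrization. -/
instance grTop (ι : Type) (k : ℕ) : TopologicalSpace (Gr ι k) :=
  TopologicalSpace.coinduced (stiefelToGr ι k) (stiefelTop ι k)

/-- Dimension of a subset of the Grassmannian: topological Krull dimension. -/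
def grdim {ι : Type} {k : ℕ} (S : Set (Gr ι k)) : WithBot ℕ∞ := topologicalKrullDim S

/-- The (k,h)-Grassmann secant variety of V: the closure in the Grassmannian of the
set of k-planes lying in the span of h+1 independent points of V. -/
def grassSecant (ι : Type) (k h : ℕ) (V : Set (Pj ι)) : Set (Gr ι k) :=
  closure {W | ∃ p : Fin (h + 1) → Pj ι, (∀ j, p j ∈ V) ∧
    LinearIndependent ℂ (fun j => (p j).rep) ∧
    W.1 ≤ Submodule.span ℂ (Set.range fun j => (p j).rep)}

/-- Monomials of degree d in three variables: the coordinate index set of the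
target of the d-th Veronese embedding of ℙ². -/
def Mon (d : ℕ) : Type := {m : Fin 3 → ℕ // ∑ i, m i = d}

/-- The d-th Veronese embedding of ℙ². -/
def veronese (d : ℕ) (x : Pj (Fin 3)) : Pj (Mon d) :=
  Projectivization.mk ℂ (fun m => ∏ i, x.rep i ^ m.1 i) (by
    obtain ⟨i, hi⟩ := Function.ne_iff.mp (Projectivization.rep_nonzero x)
    simp only [Pi.zero_apply] at hi
    intro h
    have := congrFun h ⟨fun j => if j = i then d else 0, by simp⟩
    simp only [Pi.zero_apply] at this
    refine Finset.prod_ne_zero_iff.mpr (fun j _ => ?_) this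
    by_cases hj : j = i
    · subst hj; simpa using pow_ne_zero d hi
    · simp [hj])

/-- The Veronese surface V_{2,d}. -/
def veroneseVariety (d : ℕ) : Set (Pj (Mon d)) := Set.range (veronese d)


/-! ### Part 1: the Zariski topology on affine space -/

open MvPolynomial Topology

/-- Affine space with its Zariski topology. -/
def Aff (ι : Type) : Type := ι → ℂ

instance affInst (ι : Type) : TopologicalSpace (Aff ι) := affTop ι

lemma aff_isOpen_basic {ι : Type} (f : MvPolynomial ι ℂ) :
    IsOpen ({x | eval x f ≠ 0} : Set (Aff ι)) :=
  TopologicalSpace.isOpen_generateFrom_of_mem ⟨f, rfl⟩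

lemma aff_isClosed_basic {ι : Type} (f : MvPolynomial ι ℂ) :
    IsClosed ({x | eval x f = 0} : Set (Aff ι)) := by
  rw [← isOpen_compl_iff]
  exact aff_isOpen_basic f

lemma aff_isOpen_iff {ι : Type} (U : Set (Aff ι)) :
    IsOpen U ↔ ∀ x ∈ U, ∃ f : MvPolynomial ι ℂ, eval x f ≠ 0 ∧
      ∀ y : Aff ι, eval y f ≠ 0 → y ∈ U := by
  constructor
  · intro h
    induction h with
    | basic s hs =>
      obtain ⟨f, rfl⟩ := hs
      intro x hx
      exact ⟨f, hx, fun y hy => hy⟩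
    | univ => exact fun x _ => ⟨1, by simp, fun _ _ => trivial⟩
    | inter s t _ _ ihs iht =>
      intro x hx
      obtain ⟨f, hf, hf'⟩ := ihs x hx.1
      obtain ⟨g, hg, hg'⟩ := iht x hx.2
      refine ⟨f * g, by simp [hf, hg], fun y hy => ?_⟩
      rw [map_mul] at hy
      exact ⟨hf' y (left_ne_zero_of_mul hy), hg' y (right_ne_zero_of_mul hy)⟩
    | sUnion S _ ih =>
      rintro x ⟨s, hs, hx⟩
      obtain ⟨f, hf, hf'⟩ := ih s hs x hx
      exact ⟨f, hf, fun y hy => ⟨s, hs, hf' y hy⟩⟩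
  · intro h
    choose! f hf hf' using h
    have : U = ⋃ x ∈ U, ({y | eval y (f x) ≠ 0} : Set (Aff ι)) := by
      ext y
      simp only [Set.mem_iUnion]
      constructor
      · intro hy
        exact ⟨y, hy, hf y hy⟩
      · rintro ⟨x, hx, hy⟩
        exact hf' x hx y hy
    rw [this]
    exact isOpen_biUnion fun x _ => aff_isOpen_basic _

lemma aff_continuous {X : Type*} [TopologicalSpace X] {ι : Type} (φ : X → Aff ι)
    (h : ∀ f : MvPolynomial ι ℂ, IsOpen {x | eval (φ x) f ≠ 0}) : Continuous φ := by
  refine continuous_generateFrom_iff.2 ?_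
  rintro s ⟨f, rfl⟩
  exact h f

lemma exists_eval_ne {ι : Type} {f : MvPolynomial ι ℂ} (hf : f ≠ 0) :
    ∃ x : ι → ℂ, eval x f ≠ 0 := by
  by_contra! h
  exact hf (MvPolynomial.funext fun x => by simp [h x])

/-- Clearing denominators. -/
lemma clear_denom {ι κ : Type} (n : κ → MvPolynomial ι ℂ) (d : MvPolynomial ι ℂ)
    (f : MvPolynomial κ ℂ) : ∃ (N : ℕ) (R : MvPolynomial ι ℂ), ∀ x : ι → ℂ, eval x d ≠ 0 →
      eval x R = (eval x d) ^ N * eval (fun k => eval x (n k) / eval x d) f := by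
  induction f using MvPolynomial.induction_on with
  | C a => exact ⟨0, C a, fun x _ => by simp⟩
  | add p q hp hq =>
    obtain ⟨N, R, h⟩ := hp
    obtain ⟨N', R', h'⟩ := hq
    refine ⟨N + N', d ^ N' * R + d ^ N * R', fun x hx => ?_⟩
    simp only [map_add, map_mul, map_pow, h x hx, h' x hx]
    ring
  | mul_X p k hp =>
    obtain ⟨N, R, h⟩ := hp
    refine ⟨N + 1, R * n k, fun x hx => ?_⟩
    simp only [map_mul, h x hx, eval_X]
    field_simp
    ring

lemma clear_denom' {ι κ : Type} (n : κ → MvPolynomial ι ℂ) (d : MvPolynomial ι ℂ)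
    (f : MvPolynomial κ ℂ) : ∃ (N : ℕ) (R : MvPolynomial ι ℂ), (∀ x : ι → ℂ, eval x d ≠ 0 →
      eval x R = (eval x d) ^ N * eval (fun k => eval x (n k) / eval x d) f) ∧
      ∀ x : ι → ℂ, eval x d = 0 → eval x R = 0 := by
  obtain ⟨N, R, h⟩ := clear_denom n d f
  refine ⟨N + 1, d * R, fun x hx => ?_, fun x hx => ?_⟩
  · rw [map_mul, h x hx]; ring
  · rw [map_mul, hx, zero_mul]

lemma irr_image {ι κ : Type} (n : κ → MvPolynomial ι ℂ) (d : MvPolynomial ι ℂ) (hd : d ≠ 0) :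
    IsIrreducible ({y | ∃ x : ι → ℂ, eval x d ≠ 0 ∧ y = fun k => eval x (n k) / eval x d} :
      Set (Aff κ)) := by
  constructor
  · obtain ⟨x, hx⟩ := exists_eval_ne hd
    exact ⟨_, x, hx, rfl⟩
  · rintro u v hu hv ⟨_, ⟨x, hx, rfl⟩, hxu⟩ ⟨_, ⟨y, hy, rfl⟩, hyv⟩
    rw [aff_isOpen_iff] at hu hv
    obtain ⟨f, hf, hf'⟩ := hu _ hxu
    obtain ⟨g, hg, hg'⟩ := hv _ hyv
    obtain ⟨N, R, hR, -⟩ := clear_denom' n d f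
    obtain ⟨M, Q, hQ, -⟩ := clear_denom' n d g
    have hR0 : R ≠ 0 := by
      rintro rfl
      have := hR x hx
      rw [map_zero] at this
      exact mul_ne_zero (pow_ne_zero _ hx) hf this.symm
    have hQ0 : Q ≠ 0 := by
      rintro rfl
      have := hQ y hy
      rw [map_zero] at this
      exact mul_ne_zero (pow_ne_zero _ hy) hg this.symm
    obtain ⟨z, hz⟩ := exists_eval_ne (mul_ne_zero hd (mul_ne_zero hR0 hQ0))
    simp only [map_mul] at hz
    have hzd := left_ne_zero_of_mul hz
    have hzR := left_ne_zero_of_mul (right_ne_zero_of_mul hz)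
    have hzQ := right_ne_zero_of_mul (right_ne_zero_of_mul hz)
    rw [hR z hzd] at hzR
    rw [hQ z hzd] at hzQ
    exact ⟨_, ⟨z, hzd, rfl⟩, hf' _ (right_ne_zero_of_mul hzR), hg' _ (right_ne_zero_of_mul hzQ)⟩

/-- Vanishing ideal. -/
def vI {ι : Type} (Z : Set (Aff ι)) : Ideal (MvPolynomial ι ℂ) where
  carrier := {f | ∀ x ∈ Z, eval x f = 0}
  add_mem' := fun ha hb x hx => by rw [map_add, ha x hx, hb x hx, add_zero]
  zero_mem' := fun x _ => map_zero _
  smul_mem' := fun c f hf x hx => by rw [smul_eq_mul, map_mul, hf x hx, mul_zero]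

lemma mem_vI {ι : Type} {Z : Set (Aff ι)} {f : MvPolynomial ι ℂ} :
    f ∈ vI Z ↔ ∀ x ∈ Z, eval x f = 0 := Iff.rfl

lemma vI_prime {ι : Type} {Z : Set (Aff ι)} (hZ : IsIrreducible Z) : (vI Z).IsPrime := by
  constructor
  · intro h
    obtain ⟨x, hx⟩ := hZ.1
    have : (1 : MvPolynomial ι ℂ) ∈ vI Z := by rw [h]; trivial
    simpa using this x hx
  · intro f g hfg
    by_contra! h
    simp only [mem_vI, not_forall] at h
    obtain ⟨⟨x, hx, hfx⟩, ⟨y, hy, hgy⟩⟩ := h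
    obtain ⟨z, hz, hz1, hz2⟩ := hZ.2 _ _ (aff_isOpen_basic f) (aff_isOpen_basic g)
      ⟨x, hx, hfx⟩ ⟨y, hy, hgy⟩
    have := hfg z hz
    rw [map_mul] at this
    exact mul_ne_zero hz1 hz2 this

lemma vI_le {ι : Type} {Z Y : Set (Aff ι)} (hZ : IsClosed Z) (h : vI Z ≤ vI Y) : Y ⊆ Z := by
  intro y hy
  by_contra hyZ
  obtain ⟨f, hf, hf'⟩ := (aff_isOpen_iff _).1 hZ.isOpen_compl y hyZ
  refine hf (h (fun x hx => ?_) y hy)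
  by_contra hx'
  exact hf' x hx' hx

lemma vI_anti {ι : Type} {Z Y : Set (Aff ι)} (h : Y ⊆ Z) : vI Z ≤ vI Y :=
  fun _ hf x hx => hf x (h hx)

/-- Chains of irreducible closed subsets of a proper closed subset of affine `n`-space have length
at most `n - 1`. -/
lemma aff_chain {ι : Type} [Finite ι] (n : ℕ) (Z : Fin (n + 1) → Set (Aff ι))
    (hc : ∀ i, IsClosed (Z i)) (hi : ∀ i, IsIrreducible (Z i)) (hm : StrictMono Z)
    (D : MvPolynomial ι ℂ) (hD : D ≠ 0) (hDZ : ∀ i, ∀ x ∈ Z i, eval x D = 0) :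
    n + 1 ≤ Nat.card ι := by
  let P : Fin (n + 1) → PrimeSpectrum (MvPolynomial ι ℂ) := fun i =>
    ⟨vI (Z i.rev), vI_prime (hi _)⟩
  have hP : StrictMono P := by
    intro i j hij
    have h1 : Z j.rev < Z i.rev := hm (Fin.rev_lt_rev.2 hij)
    refine lt_of_le_of_ne (vI_anti h1.le) fun h => ?_
    have h2 : vI (Z i.rev) = vI (Z j.rev) := congrArg PrimeSpectrum.asIdeal h
    exact h1.not_ge (vI_le (hc _) h2.ge)
  let s : LTSeries (PrimeSpectrum (MvPolynomial ι ℂ)) := LTSeries.mk n P hP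
  have hs : (⊥ : PrimeSpectrum (MvPolynomial ι ℂ)) < s.head := by
    refine bot_lt_iff_ne_bot.2 fun h => hD ?_
    have h2 : vI (Z (Fin.rev 0)) = ⊥ := congrArg PrimeSpectrum.asIdeal h
    have : D ∈ vI (Z (Fin.rev 0)) := hDZ _
    rw [h2] at this
    exact this
  have := Order.LTSeries.length_le_krullDim (s.cons ⊥ hs)
  have h2 := MvPolynomial.ringKrullDim_of_isNoetherianRing (R := ℂ) (ι := ι)
  rw [ringKrullDim_eq_zero_of_field, zero_add] at h2
  unfold ringKrullDim at h2
  rw [h2] at this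
  rw [RelSeries.cons_length] at this
  have h3 : n + 1 ≤ Nat.card ι := by exact_mod_cast this
  exact h3

/-! ### Part 2: charts on the Grassmannian of lines -/

instance stiefelInst (ι : Type) (k : ℕ) : TopologicalSpace (Stiefel ι k) := stiefelTop ι k

/-- Index set of the coordinates of the chart attached to `i`, `j`. -/
abbrev CI {ι : Type} (i j : ι) : Type := Fin 2 × {m : ι // m ≠ i ∧ m ≠ j}

/-- The polynomials describing the normalized basis in a chart. -/
def secPoly {ι : Type} [DecidableEq ι] (i j : ι) (k : Fin 2 × ι) : MvPolynomial (CI i j) ℂ :=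
  if h : k.2 ≠ i ∧ k.2 ≠ j then X (k.1, ⟨k.2, h⟩)
  else if (k.1 = 0 ∧ k.2 = i) ∨ (k.1 = 1 ∧ k.2 = j) then 1 else 0

def sec {ι : Type} [DecidableEq ι] (i j : ι) (x : CI i j → ℂ) : Fin 2 × ι → ℂ :=
  fun k => eval x (secPoly i j k)

def pl {ι : Type} (i j : ι) : MvPolynomial (Fin 2 × ι) ℂ :=
  X (0, i) * X (1, j) - X (0, j) * X (1, i)

def num {ι : Type} (i j : ι) (k : CI i j) : MvPolynomial (Fin 2 × ι) ℂ :=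
  if k.1 = 0 then X (1, j) * X (0, k.2.1) - X (0, j) * X (1, k.2.1)
  else X (0, i) * X (1, k.2.1) - X (1, i) * X (0, k.2.1)

def rho {ι : Type} (i j : ι) (g : Fin 2 × ι → ℂ) : CI i j → ℂ :=
  fun k => eval g (num i j k) / eval g (pl i j)

lemma sec_other {ι : Type} [DecidableEq ι] (i j : ι) (x : CI i j → ℂ) (a : Fin 2) (m : ι)
    (h : m ≠ i ∧ m ≠ j) : sec i j x (a, m) = x (a, ⟨m, h⟩) := by
  simp only [sec, secPoly, dif_pos h, eval_X]

section
set_option linter.unusedSectionVars false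
variable {ι : Type} [DecidableEq ι] {i j : ι}

lemma sec_0i (x : CI i j → ℂ) : sec i j x (0, i) = 1 := by
  simp [sec, secPoly]

lemma sec_1j (x : CI i j → ℂ) : sec i j x (1, j) = 1 := by
  simp [sec, secPoly]

lemma sec_0j (hij : i ≠ j) (x : CI i j → ℂ) : sec i j x (0, j) = 0 := by
  simp [sec, secPoly, hij.symm]

lemma sec_1i (hij : i ≠ j) (x : CI i j → ℂ) : sec i j x (1, i) = 0 := by
  simp [sec, secPoly, hij]

lemma sec_pl (hij : i ≠ j) (x : CI i j → ℂ) : eval (sec i j x) (pl i j) = 1 := by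
  simp [pl, sec_0i, sec_1j, sec_0j hij]

lemma rho_sec (hij : i ≠ j) (x : CI i j → ℂ) : rho i j (sec i j x) = x := by
  funext ⟨a, m, hm⟩
  rw [rho, sec_pl hij, div_one]
  fin_cases a <;> simp [num, sec_0i, sec_1j, sec_0j hij, sec_1i hij, sec_other _ _ _ _ _ hm]

lemma linInd_of_pl {g : Fin 2 × ι → ℂ} (h : eval g (pl i j) ≠ 0) :
    LinearIndependent ℂ (fun (a : Fin 2) => fun m => g (a, m)) := by
  rw [Fintype.linearIndependent_iff]
  intro c hc
  have h1 := congrFun hc i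
  have h2 := congrFun hc j
  simp only [Fin.sum_univ_two, Pi.add_apply, Pi.smul_apply, smul_eq_mul, Pi.zero_apply] at h1 h2
  simp only [pl, map_sub, map_mul, eval_X] at h
  have e0 : c 0 = 0 := by
    refine (mul_eq_zero.1 ?_).resolve_right h
    linear_combination g (1, j) * h1 - g (1, i) * h2
  have e1 : c 1 = 0 := by
    refine (mul_eq_zero.1 ?_).resolve_right h
    linear_combination g (0, i) * h2 - g (0, j) * h1
  intro a
  fin_cases a
  · exact e0
  · exact e1

lemma exists_pl {g : Fin 2 × ι → ℂ}
    (h : LinearIndependent ℂ (fun (a : Fin 2) => fun m => g (a, m))) :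
    ∃ i j : ι, i ≠ j ∧ eval g (pl i j) ≠ 0 := by
  have h0 : (fun m => g (0, m)) ≠ 0 := h.ne_zero 0
  obtain ⟨i, hi⟩ := Function.ne_iff.1 h0
  simp only [Pi.zero_apply] at hi
  by_contra! hc
  have hc' : ∀ j, g (0, i) * g (1, j) - g (0, j) * g (1, i) = 0 := by
    intro j
    by_cases hij : i = j
    · subst hij; ring
    · simpa [pl] using hc i j hij
  rw [Fintype.linearIndependent_iff] at h
  have := h ![g (1, i), - g (0, i)] (by
    funext m
    simp only [Fin.sum_univ_two, Pi.add_apply, Pi.smul_apply, smul_eq_mul, Pi.zero_apply,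
      Matrix.cons_val_zero, Matrix.cons_val_one]
    linear_combination - hc' m) 1
  simp at this
  exact hi this

/-- Two frames with the same span differ by a 2×2 matrix. -/
lemma frame_rel {g g' : Stiefel ι 1} (h : stiefelToGr ι 1 g = stiefelToGr ι 1 g') :
    ∃ c : Fin 2 → Fin 2 → ℂ, ∀ (a : Fin 2) m, g'.1 (a, m) = c a 0 * g.1 (0, m) + c a 1 * g.1 (1, m) := by
  have hs : Submodule.span ℂ (Set.range fun (a : Fin 2) => fun m => g.1 (a, m)) =
      Submodule.span ℂ (Set.range fun (a : Fin 2) => fun m => g'.1 (a, m)) :=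
    congrArg Subtype.val h
  have : ∀ a : Fin 2, ∃ c : Fin 2 → ℂ, ∑ b, c b • (fun m => g.1 (b, m)) = fun m => g'.1 (a, m) := by
    intro a
    rw [← Submodule.mem_span_range_iff_exists_fun, hs]
    exact Submodule.subset_span ⟨a, rfl⟩
  choose c hc using this
  refine ⟨c, fun a m => ?_⟩
  have := congrFun (hc a) m
  simp only [Fin.sum_univ_two, Pi.add_apply, Pi.smul_apply, smul_eq_mul] at this
  exact this.symm

lemma frame_pl {g g' : Stiefel ι 1} (h : stiefelToGr ι 1 g = stiefelToGr ι 1 g')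
    (hp : eval g'.1 (pl i j) ≠ 0) : eval g.1 (pl i j) ≠ 0 ∧ rho i j g.1 = rho i j g'.1 := by
  obtain ⟨c, hc⟩ := frame_rel h
  have e : eval g'.1 (pl i j) = (c 0 0 * c 1 1 - c 0 1 * c 1 0) * eval g.1 (pl i j) := by
    simp only [pl, map_sub, map_mul, eval_X, hc]
    ring
  have hd : c 0 0 * c 1 1 - c 0 1 * c 1 0 ≠ 0 := fun h0 => hp (by rw [e, h0, zero_mul])
  have hg : eval g.1 (pl i j) ≠ 0 := fun h0 => hp (by rw [e, h0, mul_zero])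
  refine ⟨hg, ?_⟩
  funext ⟨a, m, hm⟩
  have e2 : eval g'.1 (num i j (a, ⟨m, hm⟩)) =
      (c 0 0 * c 1 1 - c 0 1 * c 1 0) * eval g.1 (num i j (a, ⟨m, hm⟩)) := by
    fin_cases a
    · simp [num, hc]
      ring
    · simp [num, hc]
      ring
  rw [rho, rho, e, e2, mul_div_mul_left _ _ hd]

/-- The chart as a map to the Stiefel space. -/
def secS (hij : i ≠ j) (x : CI i j → ℂ) : Stiefel ι 1 :=
  ⟨sec i j x, linInd_of_pl (i := i) (j := j) (by rw [sec_pl hij]; exact one_ne_zero)⟩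

def chartF (hij : i ≠ j) (x : CI i j → ℂ) : Gr ι 1 := stiefelToGr ι 1 (secS hij x)

def chart (hij : i ≠ j) : Aff (CI i j) → Gr ι 1 := chartF hij

lemma secS_pl (hij : i ≠ j) (x : CI i j → ℂ) : eval (secS hij x).1 (pl i j) ≠ 0 := by
  change eval (sec i j x) (pl i j) ≠ 0
  rw [sec_pl hij]
  exact one_ne_zero

lemma rho_secS (hij : i ≠ j) (x : CI i j → ℂ) : rho i j (secS hij x).1 = x := rho_sec hij x

lemma chartF_inj (hij : i ≠ j) : Function.Injective (chartF hij : _ → Gr ι 1) := by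
  intro x y hxy
  have h := frame_pl (i := i) (j := j) (g := secS hij x) (g' := secS hij y) hxy (secS_pl hij y)
  have h2 := h.2
  rwa [rho_secS hij, rho_secS hij] at h2

lemma eval_sec (x : CI i j → ℂ) (f : MvPolynomial (Fin 2 × ι) ℂ) :
    eval (sec i j x) f = eval x (aeval (secPoly i j) f) := by
  induction f using MvPolynomial.induction_on with
  | C a => simp
  | add p q hp hq => simp only [map_add, hp, hq]
  | mul_X p k hp => simp only [map_mul, hp, eval_X, aeval_X]; rfl

lemma chart_rho (hij : i ≠ j) (g : Stiefel ι 1) (hg : eval g.1 (pl i j) ≠ 0) :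
    chartF hij (rho i j g.1) = stiefelToGr ι 1 g := by
  have hg' := hg
  simp only [pl, map_sub, map_mul, eval_X] at hg'
  have hfin : FiniteDimensional ℂ (stiefelToGr ι 1 g).1 :=
    FiniteDimensional.span_of_finite ℂ (Set.finite_range _)
  refine Subtype.ext (Submodule.eq_of_le_of_finrank_eq ?_ ?_)
  · refine Submodule.span_le.2 ?_
    rintro _ ⟨a, rfl⟩
    refine (Submodule.mem_span_range_iff_exists_fun ℂ).2 ?_
    have key : ∀ (a : Fin 2), ∃ u v : ℂ, ∀ m,
        u * g.1 (0, m) + v * g.1 (1, m) = sec i j (rho i j g.1) (a, m) := by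
      intro a
      fin_cases a
      · refine ⟨g.1 (1, j) / eval g.1 (pl i j), - g.1 (0, j) / eval g.1 (pl i j), fun m => ?_⟩
        by_cases hm : m ≠ i ∧ m ≠ j
        · simp only [Fin.zero_eta, sec_other _ _ _ _ _ hm, rho, num, if_pos, map_sub, map_mul, eval_X]
          ring
        · by_cases hmi : m = i
          · subst hmi
            simp only [Fin.zero_eta, sec_0i]
            rw [div_mul_eq_mul_div, div_mul_eq_mul_div, ← add_div, div_eq_one_iff_eq hg]
            simp only [pl, map_sub, map_mul, eval_X]
            ring
          · have : m = j := by tauto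
            subst this
            simp only [Fin.zero_eta, sec_0j hij]
            ring
      · refine ⟨- g.1 (1, i) / eval g.1 (pl i j), g.1 (0, i) / eval g.1 (pl i j), fun m => ?_⟩
        by_cases hm : m ≠ i ∧ m ≠ j
        · simp only [Fin.mk_one, sec_other _ _ _ _ _ hm, rho, num, one_ne_zero, if_false, map_sub, map_mul, eval_X]
          ring
        · by_cases hmi : m = i
          · subst hmi
            simp only [Fin.mk_one, sec_1i hij]
            ring
          · have : m = j := by tauto
            subst this
            simp only [Fin.mk_one, sec_1j]
            rw [div_mul_eq_mul_div, div_mul_eq_mul_div, ← add_div, div_eq_one_iff_eq hg]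
            simp only [pl, map_sub, map_mul, eval_X]
            ring
    obtain ⟨u, v, huv⟩ := key a
    refine ⟨![u, v], ?_⟩
    funext m
    refine Eq.trans ?_ (huv m)
    simp [Fin.sum_univ_two]
  · exact (chartF hij (rho i j g.1)).2.trans (stiefelToGr ι 1 g).2.symm

lemma stiefel_isOpen (U : Set (Aff (Fin 2 × ι))) (hU : IsOpen U) :
    IsOpen ({g | g.1 ∈ U} : Set (Stiefel ι 1)) := ⟨U, hU, rfl⟩

lemma continuous_stiefelToGr : Continuous (stiefelToGr ι 1) := continuous_coinduced_rng

lemma gr_isOpen (U : Set (Gr ι 1)) : IsOpen U ↔ IsOpen (stiefelToGr ι 1 ⁻¹' U) := isOpen_coinduced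

lemma continuous_secS (hij : i ≠ j) :
    Continuous (fun x : Aff (CI i j) => (secS hij x : Stiefel ι 1)) := by
  refine continuous_induced_rng.2 ?_
  refine @aff_continuous (Aff (CI i j)) _ (Fin 2 × ι) _ fun f => ?_
  have h1 := aff_isOpen_basic (aeval (secPoly i j) f)
  have h2 : (fun x : CI i j → ℂ => eval (sec i j x) f ≠ 0) =
      fun x => eval x (aeval (secPoly i j) f) ≠ 0 := by
    funext x
    rw [eval_sec]
  exact (congrArg (fun U : (CI i j → ℂ) → Prop => @IsOpen (Aff (CI i j)) _ {x | U x}) h2).mpr h1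

lemma chart_preimage (hij : i ≠ j) (V : Set (CI i j → ℂ)) :
    stiefelToGr ι 1 ⁻¹' (chartF hij '' V) = {g | eval g.1 (pl i j) ≠ 0 ∧ rho i j g.1 ∈ V} := by
  ext g
  constructor
  · rintro ⟨x, hx, hxg⟩
    have h := frame_pl (i := i) (j := j) (g := g) (g' := secS hij x) hxg.symm (secS_pl hij x)
    refine ⟨h.1, ?_⟩
    rw [h.2, rho_secS hij]
    exact hx
  · rintro ⟨hg, hV⟩
    exact ⟨_, hV, chart_rho hij g hg⟩

lemma chart_isOpenEmbedding (hij : i ≠ j) : IsOpenEmbedding (chart hij : Aff (CI i j) → Gr ι 1) := by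
  refine IsOpenEmbedding.of_continuous_injective_isOpenMap
    (continuous_stiefelToGr.comp (continuous_secS hij)) (chartF_inj hij) ?_
  · intro V hV
    rw [gr_isOpen]
    refine (congrArg IsOpen (chart_preimage hij V)).mpr ?_
    refine stiefel_isOpen {g | eval g (pl i j) ≠ 0 ∧ rho i j g ∈ V} ?_
    rw [aff_isOpen_iff] at hV ⊢
    rintro g ⟨hg, hgV⟩
    obtain ⟨f, hf, hfV⟩ := hV _ hgV
    obtain ⟨N, R, hR, hR0⟩ := clear_denom' (num i j) (pl i j) f
    refine ⟨R, ?_, fun y hy => ?_⟩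
    · rw [hR g hg]
      exact mul_ne_zero (pow_ne_zero _ hg) hf
    · have hy0 : eval y (pl i j) ≠ 0 := fun h => hy (hR0 y h)
      rw [hR y hy0] at hy
      exact ⟨hy0, hfV _ (right_ne_zero_of_mul hy)⟩

end

/-! ### Part 3: the apolarity determinant and the upper bound -/

instance monDec (d : ℕ) : DecidableEq (Mon d) :=
  inferInstanceAs (DecidableEq {m : Fin 3 → ℕ // ∑ i, m i = d})

/-- Enumeration of the cubic monomials. -/
def en : Fin 10 → Mon 3 := ![⟨![3, 0, 0], rfl⟩, ⟨![2, 1, 0], rfl⟩, ⟨![2, 0, 1], rfl⟩,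
  ⟨![1, 2, 0], rfl⟩, ⟨![1, 1, 1], rfl⟩, ⟨![1, 0, 2], rfl⟩, ⟨![0, 3, 0], rfl⟩,
  ⟨![0, 2, 1], rfl⟩, ⟨![0, 1, 2], rfl⟩, ⟨![0, 0, 3], rfl⟩]

lemma en_bij : Function.Bijective en := by
  constructor
  · intro a b
    revert a b
    decide
  · rintro ⟨m, hm⟩
    have h : ∀ f ∈ Finset.Nat.antidiagonalTuple 3 3, ∃ k, (en k).1 = f := by decide
    obtain ⟨k, hk⟩ := h m (Finset.Nat.mem_antidiagonalTuple.2 hm)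
    exact ⟨k, Subtype.ext hk⟩

def enE : Fin 10 ≃ Mon 3 := Equiv.ofBijective en en_bij

instance monFin : Fintype (Mon 3) := Fintype.ofEquiv _ enE

lemma card_mon : Fintype.card (Mon 3) = 10 := by
  rw [← Fintype.card_congr enE, Fintype.card_fin]

lemma card_CI {i j : Mon 3} (hij : i ≠ j) : Nat.card (CI i j) = 16 := by
  rw [Nat.card_eq_fintype_card, Fintype.card_prod, Fintype.card_fin, Fintype.card_subtype]
  have : (Finset.univ.filter fun m : Mon 3 => m ≠ i ∧ m ≠ j) = Finset.univ \ {i, j} := by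
    ext m
    simp
  rw [this, Finset.card_sdiff_of_subset (Finset.subset_univ _), Finset.card_univ, card_mon,
    Finset.card_pair hij]

/-- Quadratic monomials. -/
def Qm (c : Fin 2 × Fin 3) (k : Fin 3) : ℕ :=
  if c.1 = 0 then (if k = c.2 then 2 else 0) else (if k = c.2 then 0 else 1)

def mon3 (j : Fin 3) (c : Fin 2 × Fin 3) : Mon 3 :=
  ⟨fun k => (if k = j then 1 else 0) + Qm c k, by revert j c; decide⟩

/-- The 6×6 matrix of polar conics of a pencil of cubics. -/
def Mg (g : Fin 2 × Mon 3 → ℂ) : Matrix (Fin 2 × Fin 3) (Fin 2 × Fin 3) ℂ :=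
  Matrix.of fun r c => g (r.1, mon3 r.2 c)

def Dp : MvPolynomial (Fin 2 × Mon 3) ℂ :=
  (Matrix.of fun (r c : Fin 2 × Fin 3) =>
    (X (r.1, mon3 r.2 c) : MvPolynomial (Fin 2 × Mon 3) ℂ)).det

lemma eval_Dp (g : Fin 2 × Mon 3 → ℂ) : eval g Dp = (Mg g).det := by
  rw [Dp, RingHom.map_det]
  congr 1
  ext r c
  simp [Mg]

/-- Apolarity to some conic. -/
def Apol (W : Submodule ℂ (Mon 3 → ℂ)) : Prop :=
  ∃ q : Fin 2 × Fin 3 → ℂ, q ≠ 0 ∧ ∀ w ∈ W, ∀ j, ∑ c, w (mon3 j c) * q c = 0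

lemma Dp_iff (g : Stiefel (Mon 3) 1) : eval g.1 Dp = 0 ↔ Apol (stiefelToGr (Mon 3) 1 g).1 := by
  rw [eval_Dp, ← Matrix.exists_mulVec_eq_zero_iff]
  constructor
  · rintro ⟨q, hq, h⟩
    refine ⟨q, hq, fun w hw j => ?_⟩
    change w ∈ Submodule.span ℂ _ at hw
    induction hw using Submodule.span_induction with
    | mem w hw =>
      obtain ⟨a, rfl⟩ := hw
      exact congrFun h (a, j)
    | zero => simp
    | add x y _ _ hx hy => simp only [Pi.add_apply, add_mul, Finset.sum_add_distrib, hx, hy, add_zero]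
    | smul a x _ hx =>
      simp only [Pi.smul_apply, smul_eq_mul, mul_assoc]
      rw [← Finset.mul_sum, hx, mul_zero]
  · rintro ⟨q, hq, h⟩
    refine ⟨q, hq, ?_⟩
    funext ⟨a, j⟩
    exact h (fun m => g.1 (a, m)) (Submodule.subset_span ⟨a, rfl⟩) j

lemma isClosed_Apol : IsClosed {W : Gr (Mon 3) 1 | Apol W.1} := by
  rw [← isOpen_compl_iff, gr_isOpen]
  have := stiefel_isOpen (ι := Mon 3) _ (aff_isOpen_basic Dp)
  convert this using 1
  ext g
  exact not_congr (Dp_iff g).symm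

/-- The vector of cubic monomials. -/
def vv (x : Fin 3 → ℂ) : Mon 3 → ℂ := fun m => ∏ k, x k ^ m.1 k

lemma vv_mon3 (x : Fin 3 → ℂ) (j : Fin 3) (c : Fin 2 × Fin 3) :
    vv x (mon3 j c) = x j * ∏ l, x l ^ Qm c l := by
  change ∏ l, x l ^ ((if l = j then 1 else 0) + Qm c l) = _
  have : ∏ l, x l ^ (if l = j then 1 else 0) = x j := by
    rw [Finset.prod_eq_single j]
    · simp
    · intro b _ hb; simp [hb]
    · simp
  simp only [pow_add, Finset.prod_mul_distrib]
  rw [this]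

lemma veronese_rep (x : Pj (Fin 3)) : ∃ u : ℂˣ, u • vv x.rep = (veronese 3 x).rep :=
  Projectivization.exists_smul_eq_mk_rep ℂ _ _

/-- The set whose closure is the Grassmann secant variety. -/
def secSet : Set (Gr (Mon 3) 1) := {W | ∃ p : Fin (4 + 1) → Pj (Mon 3),
    (∀ j, p j ∈ veroneseVariety 3) ∧ LinearIndependent ℂ (fun j => (p j).rep) ∧
    W.1 ≤ Submodule.span ℂ (Set.range fun j => (p j).rep)}

lemma secSet_Apol : secSet ⊆ {W : Gr (Mon 3) 1 | Apol W.1} := by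
  rintro W ⟨p, hp, -, hW⟩
  choose x hx using hp
  let T : (Fin 2 × Fin 3 → ℂ) →ₗ[ℂ] (Fin 5 → ℂ) :=
    Matrix.mulVecLin (Matrix.of fun k c => ∏ l, (x k).rep l ^ Qm c l)
  have hT : LinearMap.ker T ≠ ⊥ := LinearMap.ker_ne_bot_of_finrank_lt (by simp)
  obtain ⟨q, hq, hq0⟩ := (Submodule.ne_bot_iff _).1 hT
  refine ⟨q, hq0, fun w hw j => ?_⟩
  have hw' := hW hw
  clear hw
  induction hw' using Submodule.span_induction with
  | mem w hw =>
    obtain ⟨k, rfl⟩ := hw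
    obtain ⟨u, hu⟩ := veronese_rep (x k)
    rw [hx k] at hu
    have h1 : ∑ c, (∏ l, (x k).rep l ^ Qm c l) * q c = 0 := congrFun hq k
    have h2 : ∀ c, (p k).rep (mon3 j c) * q c =
        (u : ℂ) * (x k).rep j * ((∏ l, (x k).rep l ^ Qm c l) * q c) := by
      intro c
      rw [← hu, Pi.smul_apply, vv_mon3, Units.smul_def, smul_eq_mul]
      ring
    simp only [h2]
    rw [← Finset.mul_sum, h1, mul_zero]
  | zero => simp
  | add x y _ _ hx hy => simp only [Pi.add_apply, add_mul, Finset.sum_add_distrib, hx, hy, add_zero]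
  | smul a x _ hx =>
    simp only [Pi.smul_apply, smul_eq_mul, mul_assoc]
    rw [← Finset.mul_sum, hx, mul_zero]

lemma grassSecant_Apol : grassSecant (Mon 3) 1 4 (veroneseVariety 3) ⊆ {W | Apol W.1} :=
  closure_minimal secSet_Apol isClosed_Apol

/-- The Hesse pencil. -/
def hesse : Fin 2 × Mon 3 → ℂ := fun k =>
  if k.1 = 0 then (if k.2 = en 0 ∨ k.2 = en 6 ∨ k.2 = en 9 then 1 else 0)
  else (if k.2 = en 4 then 1 else 0)

lemma Mg_hesse : Mg hesse = 1 := by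
  have h1 : ∀ (r c : Fin 2 × Fin 3), r.1 = 0 →
      ((mon3 r.2 c = en 0 ∨ mon3 r.2 c = en 6 ∨ mon3 r.2 c = en 9) ↔ r = c) := by decide
  have h2 : ∀ (r c : Fin 2 × Fin 3), r.1 ≠ 0 → ((mon3 r.2 c = en 4) ↔ r = c) := by decide
  ext r c
  simp only [Mg, hesse, Matrix.of_apply, Matrix.one_apply]
  by_cases h : r.1 = 0
  · simp only [h, if_true, h1 r c h]
  · simp only [h, if_false, h2 r c h]

lemma Dp_ne : Dp ≠ 0 := by
  intro h
  have := eval_Dp hesse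
  rw [Mg_hesse, h] at this
  simp at this

lemma stiefel_surj (W : Gr (Mon 3) 1) : ∃ g, stiefelToGr (Mon 3) 1 g = W := by
  let b := Module.finBasisOfFinrankEq ℂ W.1 W.2
  have hb : LinearIndependent ℂ (fun a => (b a : Mon 3 → ℂ)) :=
    b.linearIndependent.map' W.1.subtype (Submodule.ker_subtype _)
  refine ⟨⟨fun k => (b k.1 : Mon 3 → ℂ) k.2, hb⟩, Subtype.ext ?_⟩
  change Submodule.span ℂ (Set.range fun a => (b a : Mon 3 → ℂ)) = W.1
  have : (Set.range fun a => (b a : Mon 3 → ℂ)) = W.1.subtype '' Set.range b := by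
    rw [← Set.range_comp]; rfl
  rw [this, Submodule.span_image, b.span_eq, Submodule.map_top, Submodule.range_subtype]

lemma chartPoly_ne {i j : Mon 3} (hij : i ≠ j) : aeval (secPoly i j) Dp ≠ 0 := by
  intro h
  have hpl : pl i j ≠ 0 := by
    intro h0
    have := sec_pl hij 0
    rw [h0] at this
    simp at this
  refine mul_ne_zero Dp_ne hpl (MvPolynomial.funext fun g => ?_)
  rw [map_mul, map_zero]
  by_contra hg
  have h1 := left_ne_zero_of_mul hg
  have h2 := right_ne_zero_of_mul hg
  let g' : Stiefel (Mon 3) 1 := ⟨g, linInd_of_pl h2⟩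
  refine h1 ((Dp_iff g').2 ?_)
  rw [← chart_rho hij g' h2]
  refine (Dp_iff (secS hij (rho i j g'.1))).1 ?_
  change eval (sec i j _) Dp = 0
  rw [eval_sec, h, map_zero]

lemma upper : grdim (grassSecant (Mon 3) 1 4 (veroneseVariety 3)) ≤ ((15 : ℕ) : ℕ∞) := by
  set S := grassSecant (Mon 3) 1 4 (veroneseVariety 3) with hS
  have hSc : IsClosed S := isClosed_closure
  refine iSup_le fun p => ?_
  let K : Fin (p.length + 1) → Set (Gr (Mon 3) 1) := fun a => Subtype.val '' (p a : Set S)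
  have hKc : ∀ a, IsClosed (K a) := fun a => hSc.isClosedMap_subtype_val _ (p a).isClosed
  have hKi : ∀ a, IsIrreducible (K a) := fun a =>
    (p a).isIrreducible.image _ continuous_subtype_val.continuousOn
  have hKm : StrictMono K := by
    intro a b hab
    have h1 : p a < p b := p.strictMono hab
    have h2 : (p a : Set S) < p b := h1
    exact Subtype.val_injective.image_strictMono h2
  obtain ⟨w, hw⟩ := (hKi 0).1
  obtain ⟨g, rfl⟩ := stiefel_surj w
  obtain ⟨i, j, hij, hp⟩ := exists_pl g.2
  have hw' : ∀ a, stiefelToGr (Mon 3) 1 g ∈ K a := fun a => hKm.monotone (Fin.zero_le a) hw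
  have hemb := chart_isOpenEmbedding hij
  have hle : p.length + 1 ≤ Nat.card (CI i j) := by
    refine aff_chain p.length (fun a => chart hij ⁻¹' K a) (fun a => (hKc a).preimage hemb.continuous)
      (fun a => ⟨⟨rho i j g.1, ?_⟩, (hKi a).2.preimage hemb⟩) ?_ _ (chartPoly_ne hij) ?_
    · have := hw' a
      rw [← chart_rho hij g hp] at this
      exact this
    · intro a b hab
      refine lt_of_le_not_ge (Set.preimage_mono (hKm hab).le) fun h => (hKm hab).not_ge ?_
      have hne : (K b ∩ Set.range (chart hij)).Nonempty :=
        ⟨_, hw' b, ⟨_, chart_rho hij g hp⟩⟩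
      refine (subset_closure_inter_of_isPreirreducible_of_isOpen (hKi b).2 hemb.isOpen_range hne).trans
        (closure_minimal ?_ (hKc a))
      rintro _ ⟨h1, ⟨x, rfl⟩⟩
      exact h h1
    · intro a x hx
      obtain ⟨⟨W, hWS⟩, -, hW⟩ := hx
      have h1 : Apol (chart hij x).1 := by
        rw [← hW]
        exact grassSecant_Apol hWS
      have h2 := (Dp_iff (secS hij x)).2 h1
      exact (eval_sec x Dp).symm.trans h2
  rw [card_CI hij] at hle
  have : p.length ≤ 15 := by omega
  exact_mod_cast this

/-! ### Part 4a: dominance via the inverse function theorem -/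

/-- Cubic form with coefficients `h`. -/
def cub (h : Fin 10 → ℂ) (x : Fin 3 → ℂ) : ℂ :=
  h 0 * x 0 ^ 3 + h 1 * x 0 ^ 2 * x 1 + h 2 * x 0 ^ 2 * x 2 + h 3 * x 0 * x 1 ^ 2 +
    h 4 * x 0 * x 1 * x 2 + h 5 * x 0 * x 2 ^ 2 + h 6 * x 1 ^ 3 + h 7 * x 1 ^ 2 * x 2 +
    h 8 * x 1 * x 2 ^ 2 + h 9 * x 2 ^ 3

def cubx (h : Fin 10 → ℂ) (x : Fin 3 → ℂ) : ℂ :=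
  3 * h 0 * x 0 ^ 2 + 2 * h 1 * x 0 * x 1 + 2 * h 2 * x 0 * x 2 + h 3 * x 1 ^ 2 +
    h 4 * x 1 * x 2 + h 5 * x 2 ^ 2

def cuby (h : Fin 10 → ℂ) (x : Fin 3 → ℂ) : ℂ :=
  h 1 * x 0 ^ 2 + 2 * h 3 * x 0 * x 1 + h 4 * x 0 * x 2 + 3 * h 6 * x 1 ^ 2 +
    2 * h 7 * x 1 * x 2 + h 8 * x 2 ^ 2

def cubz (h : Fin 10 → ℂ) (x : Fin 3 → ℂ) : ℂ :=
  h 2 * x 0 ^ 2 + h 4 * x 0 * x 1 + 2 * h 5 * x 0 * x 2 + h 7 * x 1 ^ 2 +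
    2 * h 8 * x 1 * x 2 + 3 * h 9 * x 2 ^ 2

lemma sum_cub (h : Mon 3 → ℂ) (x : Fin 3 → ℂ) : ∑ m, h m * vv x m = cub (fun n => h (en n)) x := by
  rw [← Equiv.sum_comp enE]
  have : ∀ n, enE n = en n := fun _ => rfl
  simp only [this, Fin.sum_univ_succ, Fin.sum_univ_zero, cub, vv, en, Fin.prod_univ_succ]
  simp
  ring

lemma lin_zero {c0 c1 c2 c3 : ℂ} {f : ℂ → ℂ} (hf : HasDerivAt f 0 0)
    (h : ∀ s, f s = c0 + c1 * s + c2 * s ^ 2 + c3 * s ^ 3) : c1 = 0 := by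
  have h1 : HasDerivAt f c1 0 := by
    have h2 := (((hasDerivAt_const (0 : ℂ) c0).add ((hasDerivAt_id (0 : ℂ)).const_mul c1)).add
      (((hasDerivAt_id (0 : ℂ)).pow 2).const_mul c2)).add
      (((hasDerivAt_id (0 : ℂ)).pow 3).const_mul c3)
    have h3 : f = fun s => c0 + c1 * s + c2 * s ^ 2 + c3 * s ^ 3 := funext h
    rw [h3]
    exact h2.congr_deriv (by simp)
  exact h1.unique hf

lemma cubx_zero (h : Fin 10 → ℂ) (x : Fin 3 → ℂ)
    (hd : HasDerivAt (fun s : ℂ => cub h (x + s • Pi.single 0 1)) 0 0) : cubx h x = 0 := by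
  refine lin_zero (c0 := cub h x) (c2 := 3 * h 0 * x 0 + h 1 * x 1 + h 2 * x 2) (c3 := h 0) hd
    fun s => ?_
  simp [cub, cubx]
  ring

lemma cuby_zero (h : Fin 10 → ℂ) (x : Fin 3 → ℂ)
    (hd : HasDerivAt (fun s : ℂ => cub h (x + s • Pi.single 1 1)) 0 0) : cuby h x = 0 := by
  refine lin_zero (c0 := cub h x) (c2 := h 3 * x 0 + 3 * h 6 * x 1 + h 7 * x 2) (c3 := h 6) hd
    fun s => ?_
  simp [cub, cuby]
  ring

lemma cubz_zero (h : Fin 10 → ℂ) (x : Fin 3 → ℂ)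
    (hd : HasDerivAt (fun s : ℂ => cub h (x + s • Pi.single 2 1)) 0 0) : cubz h x = 0 := by
  refine lin_zero (c0 := cub h x) (c2 := h 5 * x 0 + h 8 * x 1 + 3 * h 9 * x 2) (c3 := h 9) hd
    fun s => ?_
  simp [cub, cubz]
  ring

/-- The base points. -/
def bP : Fin 5 → Fin 3 → ℂ := ![![0, 1, 0], ![0, 0, 1], ![1, 1, 1], ![1, 0, -1], ![1, -1, 0]]

/-- The base coefficients. -/
def bC : Fin 2 → Fin 5 → ℂ := ![![1, 0, 0, 1, 0], ![0, 1, 1, 0, 1]]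

lemma crit (f g : Fin 10 → ℂ) (hF : ∀ k, cub f (bP k) = 0) (hG : ∀ k, cub g (bP k) = 0)
    (hx : ∀ k, cubx (fun n => bC 0 k * f n + bC 1 k * g n) (bP k) = 0)
    (hy : ∀ k, cuby (fun n => bC 0 k * f n + bC 1 k * g n) (bP k) = 0)
    (hz : ∀ k, cubz (fun n => bC 0 k * f n + bC 1 k * g n) (bP k) = 0)
    (h0 : f 0 = 0) : (∀ n, f n = 0) ∧ (∀ n, g n = 0) := by
  have hF0 := hF 0
  have hF1 := hF 1
  have hF2 := hF 2
  have hF3 := hF 3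
  have hF4 := hF 4
  have hG0 := hG 0
  have hG1 := hG 1
  have hG2 := hG 2
  have hG3 := hG 3
  have hG4 := hG 4
  have hx0 := hx 0
  have hx1 := hx 1
  have hx2 := hx 2
  have hx3 := hx 3
  have hx4 := hx 4
  have hy0 := hy 0
  have hy1 := hy 1
  have hy2 := hy 2
  have hy3 := hy 3
  have hy4 := hy 4
  have hz0 := hz 0
  have hz1 := hz 1
  have hz2 := hz 2
  have hz3 := hz 3
  have hz4 := hz 4
  simp [cub, bP] at hF0 hF1 hF2 hF3 hF4 hG0 hG1 hG2 hG3 hG4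
  simp [cubx, cuby, cubz, bP, bC] at hx0 hx1 hx2 hx3 hx4 hy0 hy1 hy2 hy3 hy4 hz0 hz1 hz2 hz3 hz4
  clear hF hG hx hy hz
  constructor <;> intro n <;> fin_cases n <;> dsimp only [Fin.mk_one, Fin.reduceFinMk, Fin.zero_eta, Fin.isValue] <;> grind

/-- Parameter space: coefficients, points, and a free value of the distinguished coordinate. -/
abbrev Th : Type := (Fin 2 → Fin 5 → ℂ) × (Fin 5 → Fin 3 → ℂ) × ℂ

def Phi (θ : Th) : Fin 2 × Mon 3 → ℂ := fun t =>
  ∑ k, θ.1 t.1 k * ∏ j, θ.2.1 k j ^ t.2.1 j + if t = ((0, en 0) : Fin 2 × Mon 3) then θ.2.2 else 0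

lemma contDiff_Phi : ContDiff ℂ 1 Phi := by
  rw [contDiff_pi]
  intro t
  unfold Phi
  refine ContDiff.add ?_ ?_
  · fun_prop
  · split_ifs <;> fun_prop

def base : Th := (bC, bP, 0)

lemma Phi_surj : (fderiv ℂ Phi base).range = ⊤ := by
  by_contra hne
  obtain ⟨l, hl, hker⟩ := Submodule.exists_le_ker_of_lt_top _ (lt_top_iff_ne_top.2 hne)
  apply hl
  have hd : ∀ v, HasDerivAt (fun s : ℂ => l (Phi (base + s • v))) 0 0 := by
    intro v
    have h1 : HasFDerivAt Phi (fderiv ℂ Phi base) base :=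
      ((contDiff_Phi.differentiable one_ne_zero) base).hasFDerivAt
    have h1' : HasFDerivAt Phi (fderiv ℂ Phi base) (base + (0 : ℂ) • v) := by
      rw [zero_smul, add_zero]; exact h1
    have h2 : HasDerivAt (fun s : ℂ => base + s • v) v 0 := by
      simpa using ((hasDerivAt_id (0 : ℂ)).smul_const v).const_add base
    have h3 := HasFDerivAt.comp_hasDerivAt (0 : ℂ) h1' h2
    have h4 := (LinearMap.toContinuousLinearMap l).hasFDerivAt.comp_hasDerivAt (0 : ℂ) h3
    have h5 : l (fderiv ℂ Phi base v) = 0 := hker ⟨v, rfl⟩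
    refine h4.congr_deriv h5
  set h : Fin 2 × Mon 3 → ℂ := fun t => l (Pi.single t 1) with hh
  have hlsum : ∀ w, l w = ∑ m, h (0, m) * w (0, m) + ∑ m, h (1, m) * w (1, m) := by
    intro w
    rw [l.pi_apply_eq_sum_univ w, Fintype.sum_prod_type, Fin.sum_univ_two]
    have e : ∀ t : Fin 2 × Mon 3, (fun j => if t = j then (1 : ℂ) else 0) = Pi.single t 1 := by
      intro t
      funext j
      simp [Pi.single_apply, eq_comm]
    simp only [hh, mul_comm, smul_eq_mul, ← e]
  have hlin : ∀ v w, (∀ s : ℂ, Phi (base + s • v) = Phi base + s • w) → l w = 0 := by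
    intro v w hvw
    refine lin_zero (c0 := l (Phi base)) (c2 := 0) (c3 := 0) (hd v) fun s => ?_
    rw [hvw s, map_add, map_smul, smul_eq_mul]
    ring
  have hcub : ∀ (a b : ℂ) (x : Fin 3 → ℂ), l (fun t => (![a, b] : Fin 2 → ℂ) t.1 * vv x t.2) =
      cub (fun n => a * h (0, en n) + b * h (1, en n)) x := by
    intro a b x
    rw [hlsum, ← sum_cub (fun m => a * h (0, m) + b * h (1, m)), ← Finset.sum_add_distrib]
    refine Finset.sum_congr rfl fun m _ => ?_
    simp
    ring
  have hc : ∀ i k, l (fun t => (Pi.single i 1 : Fin 2 → ℂ) t.1 * vv (bP k) t.2) = 0 := by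
    intro i k
    refine hlin ((Pi.single i (Pi.single k 1), 0, 0) : Th) _ fun s => ?_
    funext t
    have h1 : ∀ k', (Pi.single i (Pi.single k 1) : Fin 2 → Fin 5 → ℂ) t.1 k' =
        if k' = k then (Pi.single i 1 : Fin 2 → ℂ) t.1 else 0 := by
      intro k'
      by_cases hi : t.1 = i
      · subst hi
        simp [Pi.single_apply]
      · simp [Pi.single_apply, hi]
    simp only [Phi, base, Prod.fst_add, Prod.snd_add, Prod.smul_fst, Prod.smul_snd, Pi.add_apply,
      Pi.smul_apply, smul_eq_mul, h1, smul_zero, Pi.zero_apply, add_zero, add_mul, Finset.sum_add_distrib]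
    simp only [mul_ite, mul_zero, ite_mul, zero_mul, Finset.sum_ite_eq', Finset.mem_univ, if_true, vv]
    ring
  have hp : ∀ k j, HasDerivAt (fun s : ℂ => cub (fun n => bC 0 k * h (0, en n) +
      bC 1 k * h (1, en n)) (bP k + s • Pi.single j 1)) 0 0 := by
    intro k j
    have h1 := ((hd ((0, Pi.single k (Pi.single j 1), 0) : Th)).add_const
      (cub (fun n => bC 0 k * h (0, en n) + bC 1 k * h (1, en n)) (bP k) - l (Phi base)))
    refine h1.congr_of_eventuallyEq (Filter.Eventually.of_forall fun s => ?_)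
    simp only [← hcub]
    rw [← sub_eq_iff_eq_add, ← sub_eq_zero]
    simp only [← map_sub]
    convert map_zero l
    funext t
    have h2 : bC t.1 k = (![bC 0 k, bC 1 k] : Fin 2 → ℂ) t.1 := by
      obtain ⟨a, m⟩ := t
      fin_cases a <;> rfl
    have h3 : ∀ k', k' ≠ k → (bP + s • (Pi.single k (Pi.single j 1) : Fin 5 → Fin 3 → ℂ)) k' = bP k' := by
      intro k' hk
      simp [hk]
    have h4 : (bP + s • (Pi.single k (Pi.single j 1) : Fin 5 → Fin 3 → ℂ)) k =
      bP k + s • Pi.single j 1 := by simp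
    have h5 : ∑ k', bC t.1 k' * vv ((bP + s • (Pi.single k (Pi.single j 1) : Fin 5 → Fin 3 → ℂ)) k') t.2
       - ∑ k', bC t.1 k' * vv (bP k') t.2 =
       bC t.1 k * vv (bP k + s • Pi.single j 1) t.2 - bC t.1 k * vv (bP k) t.2 := by
      rw [← Finset.sum_sub_distrib, Finset.sum_eq_single k]
      · rw [h4]
      · intro k' _ hk
        rw [h3 k' hk, sub_self]
      · simp
    simp only [vv] at h5
    simp only [Pi.sub_apply, Pi.zero_apply, Phi, base, Prod.fst_add, Prod.snd_add, Prod.smul_fst,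
      Prod.smul_snd, smul_zero, add_zero, ← h2, vv]
    linear_combination - h5
  have ht : l (Pi.single (0, en 0) 1) = 0 := by
    refine hlin ((0, 0, 1) : Th) _ fun s => ?_
    funext t
    simp only [Phi, base, Prod.fst_add, Prod.snd_add, Prod.smul_fst,
      Prod.smul_snd, smul_zero, add_zero, Pi.add_apply, Pi.smul_apply, smul_eq_mul, mul_one, zero_add,
      Pi.single_apply]
    split_ifs <;> simp
  have hfin := crit (fun n => h (0, en n)) (fun n => h (1, en n))
    (fun k => by
      have h1 := hcub 1 0 (bP k)
      simp only [one_mul, zero_mul, add_zero] at h1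
      rw [← h1]
      refine Eq.trans ?_ (hc 0 k)
      congr 1
      funext t
      obtain ⟨a, m⟩ := t
      fin_cases a <;> simp)
    (fun k => by
      have h1 := hcub 0 1 (bP k)
      simp only [one_mul, zero_mul, zero_add] at h1
      rw [← h1]
      refine Eq.trans ?_ (hc 1 k)
      congr 1
      funext t
      obtain ⟨a, m⟩ := t
      fin_cases a <;> simp)
    (fun k => cubx_zero _ _ (hp k 0)) (fun k => cuby_zero _ _ (hp k 1))
    (fun k => cubz_zero _ _ (hp k 2)) ht
  ext t
  obtain ⟨a, m⟩ := t
  obtain ⟨n, rfl⟩ := en_bij.2 m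
  fin_cases a
  · simpa using hfin.1 n
  · simpa using hfin.2 n

/-! ### Part 4: the lower bound -/

lemma chain_le {X : Type*} [TopologicalSpace X] (S : Set X) (n : ℕ) (K : Fin (n + 1) → Set X)
    (hc : ∀ i, IsClosed (K i)) (hi : ∀ i, IsIrreducible (K i)) (hm : StrictMono K)
    (hS : ∀ i, K i ⊆ S) : (n : WithBot ℕ∞) ≤ topologicalKrullDim S := by
  let P : Fin (n + 1) → TopologicalSpace.IrreducibleCloseds S := fun i =>
    ⟨Subtype.val ⁻¹' K i, by
      obtain ⟨⟨x, hx⟩, hp⟩ := hi i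
      refine ⟨⟨⟨x, hS i hx⟩, hx⟩, ?_⟩
      rintro _ _ ⟨U, hU, rfl⟩ ⟨V, hV, rfl⟩ ⟨y, hy, hyU⟩ ⟨z, hz, hzV⟩
      obtain ⟨w, hw, hwUV⟩ := hp U V hU hV ⟨y.1, hy, hyU⟩ ⟨z.1, hz, hzV⟩
      exact ⟨⟨w, hS i hw⟩, hw, hwUV⟩, (hc i).preimage continuous_subtype_val⟩
  have hP : StrictMono P := by
    intro i j hij
    refine lt_of_le_not_ge (fun x hx => (hm hij).le hx) fun h => (hm hij).not_ge ?_
    intro x hx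
    exact h (show (⟨x, hS j hx⟩ : S) ∈ P j from hx)
  exact Order.LTSeries.length_le_krullDim (LTSeries.mk n P hP)

lemma vv_smul (a : ℂ) (x : Fin 3 → ℂ) : vv (a • x) = a ^ 3 • vv x := by
  funext ⟨m, hm⟩
  change ∏ k, (a * x k) ^ m k = a ^ 3 * ∏ k, x k ^ m k
  simp only [mul_pow, Finset.prod_mul_distrib]
  rw [Finset.prod_pow_eq_pow_sum, hm]

lemma vv_ne {x : Fin 3 → ℂ} (h : vv x ≠ 0) : x ≠ 0 := by
  rintro rfl
  apply h
  have := vv_smul 0 0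
  simpa using this

lemma veronese_mk (x : Fin 3 → ℂ) (hx : x ≠ 0) :
    ∃ u : ℂˣ, (veronese 3 (Projectivization.mk ℂ x hx)).rep = u • vv x := by
  obtain ⟨u, hu⟩ := veronese_rep (Projectivization.mk ℂ x hx)
  obtain ⟨a, ha⟩ := Projectivization.exists_smul_eq_mk_rep ℂ x hx
  refine ⟨u * a ^ 3, ?_⟩
  rw [← hu, ← ha, Units.smul_def a, vv_smul, mul_smul]
  simp [Units.smul_def]

lemma mem_secSet (g : Stiefel (Mon 3) 1) (p : Fin 5 → Fin 3 → ℂ) (c : Fin 2 → Fin 5 → ℂ)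
    (hp : LinearIndependent ℂ fun k => vv (p k))
    (hg : ∀ a m, g.1 (a, m) = ∑ k, c a k * vv (p k) m) : stiefelToGr (Mon 3) 1 g ∈ secSet := by
  have hp0 : ∀ k, p k ≠ 0 := fun k => vv_ne (hp.ne_zero k)
  choose u hu using fun k => veronese_mk (p k) (hp0 k)
  refine ⟨fun k => veronese 3 (Projectivization.mk ℂ (p k) (hp0 k)), fun k => ⟨_, rfl⟩, ?_, ?_⟩
  · simp only [hu]
    exact hp.units_smul u
  · refine Submodule.span_le.2 ?_
    rintro _ ⟨a, rfl⟩
    have : (fun m => g.1 (a, m)) = ∑ k, c a k • vv (p k) := by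
      funext m
      rw [hg a m]
      simp
    refine (congrArg (· ∈ Submodule.span ℂ _) this).mpr ?_
    refine Submodule.sum_mem _ fun k _ => Submodule.smul_mem _ _ ?_
    have h2 : vv (p k) = (u k)⁻¹ • (veronese 3 (Projectivization.mk ℂ (p k) (hp0 k))).rep := by
      rw [hu k, inv_smul_smul]
    rw [h2]
    exact Submodule.smul_mem _ ((u k)⁻¹ : ℂˣ).1 (Submodule.subset_span ⟨k, rfl⟩)

/-- The distinguished coordinate. -/
def t0 : Fin 2 × Mon 3 := (0, en 0)

def subst (s : ℂ) (k : Fin 2 × Mon 3) : MvPolynomial (Fin 2 × Mon 3) ℂ :=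
  if k = t0 then C s else X k

lemma eval_aeval' {ι κ : Type} (n : κ → MvPolynomial ι ℂ) (x : ι → ℂ) (f : MvPolynomial κ ℂ) :
    eval x (aeval n f) = eval (fun k => eval x (n k)) f := by
  induction f using MvPolynomial.induction_on with
  | C a => simp
  | add p q hp hq => simp only [map_add, hp, hq]
  | mul_X p k hp => simp only [map_mul, hp, eval_X, aeval_X]

lemma eval_subst (s : ℂ) (g : Fin 2 × Mon 3 → ℂ) (f : MvPolynomial (Fin 2 × Mon 3) ℂ) :
    eval g (aeval (subst s) f) = eval (Function.update g t0 s) f := by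
  rw [eval_aeval']
  congr 2
  funext k
  by_cases h : k = t0
  · subst h; simp [subst]
  · simp [subst, h]

lemma Dp_affine (g : Fin 2 × Mon 3 → ℂ) :
    ∃ P Q : ℂ, ∀ t, eval (Function.update g t0 t) Dp = P + t * Q := by
  refine ⟨((Mg g).updateRow (0, 0) (Function.update (Mg g (0, 0)) (0, 0) 0)).det,
    ((Mg g).updateRow (0, 0) (Pi.single (0, 0) 1)).det, fun t => ?_⟩
  rw [eval_Dp, ← Matrix.det_updateRow_smul, ← Matrix.det_updateRow_add]
  congr 1
  have h1 : ∀ (r c : Fin 2 × Fin 3), (r.1, mon3 r.2 c) = t0 ↔ r = (0, 0) ∧ c = (0, 0) := by decide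
  ext r c
  simp only [Mg, Matrix.of_apply, Matrix.updateRow_apply, Function.update_apply, Pi.add_apply,
    Pi.smul_apply, smul_eq_mul, Pi.single_apply, h1]
  by_cases hr : r = (0, 0)
  · subst hr
    by_cases hc : c = (0, 0) <;> simp [hc]
  · simp [hr]

def Bp : MvPolynomial (Fin 2 × Mon 3) ℂ := aeval (subst 0) Dp
def Ap : MvPolynomial (Fin 2 × Mon 3) ℂ := aeval (subst 1) Dp - aeval (subst 0) Dp

lemma Bp_update (g : Fin 2 × Mon 3 → ℂ) (s : ℂ) :
    eval (Function.update g t0 s) Bp = eval g Bp := by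
  simp only [Bp, eval_subst, Function.update_idem]

lemma Ap_update (g : Fin 2 × Mon 3 → ℂ) (s : ℂ) :
    eval (Function.update g t0 s) Ap = eval g Ap := by
  simp only [Ap, map_sub, eval_subst, Function.update_idem]

lemma Dp_eq (g : Fin 2 × Mon 3 → ℂ) : eval g Dp = eval g Ap * g t0 + eval g Bp := by
  obtain ⟨P, Q, h⟩ := Dp_affine g
  have h1 := h (g t0)
  rw [Function.update_eq_self] at h1
  simp only [Ap, Bp, map_sub, eval_subst, h1, h]
  ring

lemma Ap_hesse : eval hesse Ap = 1 := by
  have h1 : Function.update hesse t0 1 = hesse := by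
    rw [Function.update_eq_self_iff]
    simp [hesse, t0]
  rw [Ap, map_sub, eval_subst, eval_subst, h1, eval_Dp, eval_Dp, Mg_hesse, Matrix.det_one,
    Matrix.det_eq_zero_of_row_eq_zero (0, 0), sub_zero]
  intro c
  have h2 : ∀ c : Fin 2 × Fin 3, c ≠ (0, 0) → (((0, mon3 0 c) : Fin 2 × Mon 3) ≠ t0 ∧
    ¬ (mon3 0 c = en 0 ∨ mon3 0 c = en 6 ∨ mon3 0 c = en 9)) := by decide
  have h3 : ((0, mon3 0 (0, 0)) : Fin 2 × Mon 3) = t0 := by decide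
  by_cases hc : c = (0, 0)
  · subst hc
    simp [Mg, h3]
  · simp only [Mg, Matrix.of_apply]
    rw [Function.update_of_ne (h2 c hc).1]
    simp only [hesse, if_true, if_neg (h2 c hc).2]

lemma vv_bP : LinearIndependent ℂ fun k => vv (bP k) := by
  rw [Fintype.linearIndependent_iff]
  intro c hc
  have h : ∀ n, ∑ k, c k * vv (bP k) (en n) = 0 := by
    intro n
    have := congrFun hc (en n)
    simpa using this
  have h0 := h 0
  have h1 := h 1
  have h2 := h 2
  have h4 := h 4
  have h6 := h 6
  have h9 := h 9
  clear h hc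
  simp [Fin.sum_univ_succ, vv, bP, en, Fin.prod_univ_succ] at h0 h1 h2 h4 h6 h9
  intro i
  fin_cases i <;> dsimp only [Fin.mk_one, Fin.reduceFinMk, Fin.zero_eta, Fin.isValue] <;> grind

lemma base_rows : LinearIndependent ℂ fun a : Fin 2 => fun m : Mon 3 => Phi base (a, m) := by
  rw [Fintype.linearIndependent_iff]
  intro c hc
  have h : ∀ n, ∑ a, c a * Phi base (a, en n) = 0 := by
    intro n
    have := congrFun hc (en n)
    simpa using this
  have h1 := h 6
  have h4 := h 4
  have h2 := h 2
  clear h hc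
  simp [Fin.sum_univ_succ, Phi, base, bP, bC, en, Fin.prod_univ_succ] at h1 h2 h4
  intro i
  fin_cases i <;> dsimp only [Fin.mk_one, Fin.reduceFinMk, Fin.zero_eta, Fin.isValue] <;> grind

lemma dominance (R : MvPolynomial (Fin 2 × Mon 3) ℂ)
    (h1 : ∀ g s, eval (Function.update g t0 s) R = eval g R)
    (h2 : ∀ g : Stiefel (Mon 3) 1, stiefelToGr (Mon 3) 1 g ∈ secSet → eval g.1 R = 0) : R = 0 := by
  have hmap := (contDiff_Phi.contDiffAt.hasStrictFDerivAt one_ne_zero).map_nhds_eq_of_surj Phi_surj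
  have hA : ∀ᶠ θ in 𝓝 base, LinearIndependent ℂ (fun k => vv (θ.2.1 k)) := by
    have hc : Continuous fun θ : Th => fun k => vv (θ.2.1 k) := by
      unfold vv
      fun_prop
    have ho : IsOpen {f : Fin 5 → Mon 3 → ℂ | LinearIndependent ℂ f} :=
      isOpen_setOfPred_linearIndependent
    exact (ho.preimage hc).mem_nhds vv_bP
  have hB : ∀ᶠ θ : Th in 𝓝 base,
      LinearIndependent ℂ (fun a : Fin 2 => fun m : Mon 3 => Phi (θ.1, θ.2.1, 0) (a, m)) := by
    have hc : Continuous fun θ : Th => fun a : Fin 2 => fun m : Mon 3 => Phi (θ.1, θ.2.1, 0) (a, m) := by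
      have := contDiff_Phi.continuous
      fun_prop
    have ho : IsOpen {f : Fin 2 → Mon 3 → ℂ | LinearIndependent ℂ f} :=
      isOpen_setOfPred_linearIndependent
    exact (ho.preimage hc).mem_nhds base_rows
  have hev : ∀ᶠ g in 𝓝 (Phi base), eval g R = 0 := by
    rw [← hmap, Filter.eventually_map]
    filter_upwards [hA, hB] with θ hθA hθB
    have h3 : eval (Phi (θ.1, θ.2.1, 0)) R = 0 := by
      refine h2 ⟨Phi (θ.1, θ.2.1, 0), hθB⟩ (mem_secSet _ θ.2.1 θ.1 hθA fun a m => ?_)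
      change Phi (θ.1, θ.2.1, 0) (a, m) = _
      simp [Phi, vv]
    have h4 : Function.update (Phi θ) t0 (Phi (θ.1, θ.2.1, 0) t0) = Phi (θ.1, θ.2.1, 0) := by
      funext t
      by_cases ht : t = t0
      · subst ht; simp
      · have ht' : ¬ t = (0, en 0) := ht
        rw [Function.update_of_ne ht]
        simp only [Phi, if_neg ht']
    rw [← h1 _ (Phi (θ.1, θ.2.1, 0) t0), h4, h3]
  obtain ⟨ε, hε, hball⟩ := Metric.eventually_nhds_iff_ball.1 hev
  refine MvPolynomial.funext_set (fun t => Metric.ball (Phi base t) ε)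
    (fun t => infinite_of_mem_nhds _ (Metric.ball_mem_nhds _ hε)) fun g hg => ?_
  rw [map_zero]
  exact hball g (by rw [← ball_pi _ hε] at hg; exact hg)

lemma graph_sub (g : Stiefel (Mon 3) 1) (hD : eval g.1 Dp = 0) (hA : eval g.1 Ap ≠ 0) :
    stiefelToGr (Mon 3) 1 g ∈ grassSecant (Mon 3) 1 4 (veroneseVariety 3) := by
  by_contra hg
  have hcl : IsClosed (stiefelToGr (Mon 3) 1 ⁻¹' grassSecant (Mon 3) 1 4 (veroneseVariety 3)) :=
    isClosed_closure.preimage continuous_stiefelToGr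
  obtain ⟨U, hU, hUeq⟩ := hcl.isOpen_compl
  have hgU : g.1 ∈ U := by
    exact (Set.ext_iff.1 hUeq g).2 hg
  obtain ⟨f, hf, hfU⟩ := (aff_isOpen_iff U).1 hU _ hgU
  obtain ⟨N, R, hR, hR0⟩ := clear_denom'
    (fun k => if k = t0 then -Bp else Ap * X k) Ap f
  have hval : ∀ x : Fin 2 × Mon 3 → ℂ, eval x Ap ≠ 0 →
      (fun k => eval x (if k = t0 then -Bp else Ap * X k) / eval x Ap) =
        Function.update x t0 (- eval x Bp / eval x Ap) := by
    intro x hx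
    funext k
    by_cases hk : k = t0
    · subst hk; simp
    · simp [hk, hx]
  have hvalD : ∀ x : Fin 2 × Mon 3 → ℂ, eval x Ap ≠ 0 → eval x Dp = 0 →
      Function.update x t0 (- eval x Bp / eval x Ap) = x := by
    intro x hx hxD
    rw [Function.update_eq_self_iff, div_eq_iff hx]
    rw [Dp_eq] at hxD
    linear_combination - hxD
  have hRzero : R = 0 := by
    refine dominance R (fun x s => ?_) fun x hx => ?_
    · by_cases hx : eval x Ap = 0
      · rw [hR0 x hx, hR0 _ (by rw [Ap_update, hx])]
      · rw [hR x hx, hR _ (by rwa [Ap_update]), hval x hx, hval _ (by rwa [Ap_update]), Ap_update,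
          Bp_update, Function.update_idem]
    · by_cases hxA : eval x.1 Ap = 0
      · exact hR0 _ hxA
      · have hxD : eval x.1 Dp = 0 := (Dp_iff x).2 (secSet_Apol hx)
        rw [hR _ hxA, hval _ hxA, hvalD _ hxA hxD]
        have : eval x.1 f = 0 := by
          by_contra hne
          exact (Set.ext_iff.1 hUeq x).1 (hfU x.1 hne) (subset_closure hx)
        rw [this, mul_zero]
  have h4 := hR _ hA
  rw [hRzero, map_zero, hval _ hA, hvalD _ hA hD] at h4
  exact mul_ne_zero (pow_ne_zero _ hA) hf h4.symm

/-! ### Part 5: a chain of length 15 -/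

section
open Classical

/-- Freeze the coordinates numbered `≥ i` at the values `c`. -/
def rv {κ : Type} {t1 : κ} {n : ℕ} (e : Fin n ≃ {k : κ // k ≠ t1}) (c : κ → ℂ) (i : ℕ)
    (x : κ → ℂ) : κ → ℂ :=
  fun k => if ∃ l : Fin n, i ≤ l.1 ∧ (e l).1 = k then c k else x k

def rp {κ : Type} {t1 : κ} {n : ℕ} (e : Fin n ≃ {k : κ // k ≠ t1}) (c : κ → ℂ) (i : ℕ)
    (k : κ) : MvPolynomial κ ℂ :=
  if ∃ l : Fin n, i ≤ l.1 ∧ (e l).1 = k then C (c k) else X k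

lemma eval_rp {κ : Type} {t1 : κ} {n : ℕ} (e : Fin n ≃ {k : κ // k ≠ t1}) (c : κ → ℂ) (i : ℕ)
    (x : κ → ℂ) (k : κ) : eval x (rp e c i k) = rv e c i x k := by
  unfold rp rv
  split_ifs <;> simp

lemma eval_rp_aeval {κ : Type} {t1 : κ} {n : ℕ} (e : Fin n ≃ {k : κ // k ≠ t1}) (c : κ → ℂ) (i : ℕ)
    (x : κ → ℂ) (f : MvPolynomial κ ℂ) : eval x (aeval (rp e c i) f) = eval (rv e c i x) f := by
  rw [eval_aeval']
  simp only [eval_rp]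

lemma rv_rv {κ : Type} {t1 : κ} {n : ℕ} (e : Fin n ≃ {k : κ // k ≠ t1}) (c : κ → ℂ) {i j : ℕ}
    (hij : i ≤ j) (x : κ → ℂ) : rv e c j (rv e c i x) = rv e c i x := by
  funext k
  by_cases h : ∃ l : Fin n, j ≤ l.1 ∧ (e l).1 = k
  · obtain ⟨l, hl, hk⟩ := h
    have h1 : ∃ l : Fin n, i ≤ l.1 ∧ (e l).1 = k := ⟨l, hij.trans hl, hk⟩
    have h2 : ∃ l : Fin n, j ≤ l.1 ∧ (e l).1 = k := ⟨l, hl, hk⟩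
    simp only [rv, if_pos h1, if_pos h2]
  · conv_lhs => rw [rv, if_neg h]

lemma graph_chain {κ : Type} [DecidableEq κ] {t1 : κ} {n : ℕ} (e : Fin n ≃ {k : κ // k ≠ t1}) (c : κ → ℂ)
    (a b : MvPolynomial κ ℂ) (hc : eval c a ≠ 0) :
    ∃ Z : Fin (n + 1) → Set (Aff κ), (∀ i, IsIrreducible (Z i)) ∧
      (∀ i, ∀ y ∈ Z i, ∃ x : κ → ℂ, eval x a ≠ 0 ∧
        y = Function.update x t1 (- eval x b / eval x a)) ∧
      (∀ i j, i < j → Z i ⊆ Z j) ∧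
      ∀ i j, i < j → ∃ q : MvPolynomial κ ℂ, (∀ y ∈ Z i, eval y q = 0) ∧ ∃ y ∈ Z j, eval y q ≠ 0 := by
  have hrc : ∀ i, rv e c i c = c := fun i => by
    funext k
    simp [rv]
  have hden : ∀ i, aeval (rp e c i) a ≠ 0 := by
    intro i h
    have := eval_rp_aeval e c i c a
    rw [h, hrc, map_zero] at this
    exact hc this.symm
  let nn : ℕ → κ → MvPolynomial κ ℂ := fun i k =>
    if k = t1 then - aeval (rp e c i) b else aeval (rp e c i) a * rp e c i k
  have hval : ∀ i (x : κ → ℂ), eval (rv e c i x) a ≠ 0 →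
      (fun k => eval x (nn i k) / eval x (aeval (rp e c i) a)) =
        Function.update (rv e c i x) t1 (- eval (rv e c i x) b / eval (rv e c i x) a) := by
    intro i x hx
    funext k
    by_cases hk : k = t1
    · subst hk
      simp only [nn, if_true, Function.update_self, map_neg, eval_rp_aeval]
    · simp only [nn, if_neg hk, Function.update_of_ne hk, map_mul, eval_rp_aeval, eval_rp]
      rw [mul_div_cancel_left₀ _ hx]
  let Z : Fin (n + 1) → Set (κ → ℂ) := fun i =>
    {y | ∃ x : κ → ℂ, eval (rv e c i x) a ≠ 0 ∧
      y = Function.update (rv e c i x) t1 (- eval (rv e c i x) b / eval (rv e c i x) a)}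
  have hZ : ∀ i : Fin (n + 1), Z i = {y | ∃ x : κ → ℂ, eval x (aeval (rp e c i) a) ≠ 0 ∧
      y = fun k => eval x (nn i k) / eval x (aeval (rp e c i) a)} := by
    intro i
    ext y
    constructor
    · rintro ⟨x, hx, rfl⟩
      exact ⟨x, by rwa [eval_rp_aeval], (hval i x hx).symm⟩
    · rintro ⟨x, hx, rfl⟩
      rw [eval_rp_aeval] at hx
      exact ⟨x, hx, hval i x hx⟩
  refine ⟨Z, fun i => ?_, ?_, ?_, ?_⟩
  · have := irr_image (nn i) _ (hden i)
    exact (congrArg (fun S : Set (κ → ℂ) => @IsIrreducible (Aff κ) _ S) (hZ i)).mpr this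
  · rintro i y ⟨x, hx, hy⟩
    exact ⟨_, hx, hy⟩
  · rintro i j hij y ⟨x, hx, hy⟩
    have h := rv_rv e c (i := i) (j := j) (le_of_lt hij) x
    exact ⟨rv e c i x, by rwa [h], by rw [h]; exact hy⟩
  · intro i j hij
    have hin : i.1 < n := by omega
    set k0 := (e ⟨i.1, hin⟩).1 with hk0
    have hk0t : k0 ≠ t1 := (e ⟨i.1, hin⟩).2
    refine ⟨X k0 - C (c k0), ?_, ?_⟩
    · rintro y ⟨x, hx, hy⟩
      have h1 : y k0 = c k0 := by
        rw [hy, Function.update_of_ne hk0t, rv, if_pos ⟨⟨i.1, hin⟩, le_rfl, rfl⟩]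
      have h3 : ∀ z : κ → ℂ, eval z (X k0 - C (c k0)) = z k0 - c k0 := fun z => by simp
      exact (h3 y).trans (sub_eq_zero.2 h1)
    · have hX : (X k0 - C (c k0) : MvPolynomial κ ℂ) ≠ 0 := by
        intro h
        have := congrArg (eval (fun _ => c k0 + 1)) h
        simp at this
      obtain ⟨x, hx⟩ := exists_eval_ne (mul_ne_zero hX (hden j))
      rw [map_mul, eval_rp_aeval] at hx
      refine ⟨_, ⟨x, right_ne_zero_of_mul hx, rfl⟩, ?_⟩
      have hnf : ¬ ∃ l : Fin n, j.1 ≤ l.1 ∧ (e l).1 = k0 := by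
        rintro ⟨l, hl, hlk⟩
        have := e.injective (Subtype.ext (hlk.trans hk0))
        rw [this] at hl
        exact absurd hij (not_lt.2 hl)
      have h2 := left_ne_zero_of_mul hx
      simp only [map_sub, eval_X, eval_C, Function.update_of_ne hk0t] at h2 ⊢
      rwa [rv, if_neg hnf]

end

lemma h64 : en 6 ≠ en 4 := by decide

def i6 : CI (en 6) (en 4) := (0, ⟨en 0, by decide⟩)

lemma sec_update (x : CI (en 6) (en 4) → ℂ) (s : ℂ) :
    sec (en 6) (en 4) (Function.update x i6 s) = Function.update (sec (en 6) (en 4) x) t0 s := by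
  funext ⟨a, m⟩
  by_cases hm : m ≠ en 6 ∧ m ≠ en 4
  · rw [sec_other _ _ _ _ _ hm]
    by_cases ht : (a, m) = t0
    · obtain ⟨rfl, rfl⟩ := Prod.mk.inj ht
      rw [ht, Function.update_self]
      exact Function.update_self ..
    · rw [Function.update_of_ne ht, sec_other _ _ _ _ _ hm, Function.update_of_ne]
      intro h
      apply ht
      obtain ⟨h1, h2⟩ := Prod.mk.inj h
      exact Prod.ext h1 (congrArg Subtype.val h2)
  · have ht : (a, m) ≠ t0 := by
      intro h
      obtain ⟨rfl, rfl⟩ := Prod.mk.inj h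
      exact hm (by decide)
    rw [Function.update_of_ne ht]
    simp only [sec, secPoly, dif_neg hm]
    split_ifs <;> simp

lemma sec_hesse : sec (en 6) (en 4) (fun k => hesse (k.1, k.2.1)) = hesse := by
  funext ⟨a, m⟩
  by_cases hm : m ≠ en 6 ∧ m ≠ en 4
  · rw [sec_other _ _ _ _ _ hm]
  · simp only [sec, secPoly, dif_neg hm]
    have h1 : en 6 ≠ en 4 := by decide
    have h2 : en 4 ≠ en 0 ∧ en 4 ≠ en 9 := by decide
    have h3 : en 4 ≠ en 6 := by decide
    by_cases h6 : m = en 6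
    · subst h6
      fin_cases a <;> simp [hesse, h1]
    · have h4 : m = en 4 := by
        by_contra h
        exact hm ⟨h6, h⟩
      subst h4
      fin_cases a <;> simp [hesse, h2.1, h2.2, h3]

lemma lower : ((15 : ℕ) : WithBot ℕ∞) ≤ grdim (grassSecant (Mon 3) 1 4 (veroneseVariety 3)) := by
  have hcard : Nat.card {k : CI (en 6) (en 4) // k ≠ i6} = 15 := by
    have h1 := card_CI h64
    rw [Nat.card_eq_fintype_card] at h1 ⊢
    rw [Fintype.card_subtype_compl, Fintype.card_subtype_eq, h1]
  have : Finite {k : CI (en 6) (en 4) // k ≠ i6} := inferInstance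
  have e : Fin 15 ≃ {k : CI (en 6) (en 4) // k ≠ i6} := (Finite.equivFinOfCardEq hcard).symm
  obtain ⟨Z, hirr, hgr, hmono, hstrict⟩ := graph_chain e (fun k => hesse (k.1, k.2.1))
    (aeval (secPoly (en 6) (en 4)) Ap) (aeval (secPoly (en 6) (en 4)) Bp)
    (by rw [← eval_sec, sec_hesse, Ap_hesse]; exact one_ne_zero)
  have hemb := chart_isOpenEmbedding h64
  have hcl : IsClosed (grassSecant (Mon 3) 1 4 (veroneseVariety 3)) := isClosed_closure
  refine chain_le _ 15 (fun i => closure (chart h64 '' Z i)) (fun _ => isClosed_closure)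
    (fun i => ((hirr i).image _ hemb.continuous.continuousOn).closure) ?_ ?_
  · intro i j hij
    refine lt_of_le_not_ge (closure_mono (Set.image_mono (hmono i j hij))) fun h => ?_
    obtain ⟨q, hq, y, hy, hyq⟩ := hstrict i j hij
    have h1 : y ∈ closure (Z i) := by
      rw [hemb.isInducing.closure_eq_preimage_closure_image]
      exact h (subset_closure ⟨y, hy, rfl⟩)
    exact hyq (closure_minimal (s := Z i) hq (aff_isClosed_basic q) h1)
  · intro i
    refine closure_minimal ?_ hcl
    rintro _ ⟨y, hy, rfl⟩
    obtain ⟨x, hx, hxy⟩ := hgr i y hy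
    rw [← eval_sec] at hx
    rw [← eval_sec, ← eval_sec] at hxy
    have hs : (secS h64 y).1 = Function.update (sec (en 6) (en 4) x) t0
        (- eval (sec (en 6) (en 4) x) Bp / eval (sec (en 6) (en 4) x) Ap) := by
      rw [← sec_update]
      exact congrArg (sec (en 6) (en 4)) hxy
    refine graph_sub (secS h64 y) ?_ ?_
    · rw [hs, Dp_eq, Ap_update, Bp_update, Function.update_self]
      field_simp
      ring
    · rwa [hs, Ap_update]


/-- London: the cubic Veronese surface V_{2,3} ⊆ ℙ⁹ is (1,4)-defective
with defect 1: the variety of lines lying in the span of 5 points of V_{2,3} has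
dimension one less than the expected dimension min{5·2 + 2·3, 2·8} = 16. -/
theorem stmt16 :
    grdim (grassSecant (Mon 3) 1 4 (veroneseVariety 3)) + (1 : ℕ∞) = ((16 : ℕ) : ℕ∞) := by
  have h : grdim (grassSecant (Mon 3) 1 4 (veroneseVariety 3)) = ((15 : ℕ) : ℕ∞) :=
    le_antisymm upper lower
  rw [h]
  rfl
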